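/- There exists a constant C ∈ ℝ_{≥0} such that for every f ∈ 𝓕^{[r]}(𝒪_F,S) one has sup_{a∈A} sup_{i∈I_{≤[r]}} |b_{a,i,r}(f)| ≤ C·‖f‖_{C^r}, where b_{a,i,r}(f) are the coefficients of f in the basis (e_{a,i,r})_{a∈A, i∈I_{≤[r]}} of 𝓕^{[r]}(𝒪_F,S). -/

import Mathlib

/-!
Setting (cf. the paper's notations): `O` plays the role of the ring of integers `𝒪_F` of a
finite extension `F` of `ℚ_p`, `E` is the coefficient field (a finite extension of `ℚ_p`
with its p-adic absolute value, normalized by `|x| = p^{-val_F(x)}`, `val_F(p) = [F:ℚ_p]`),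
`S` is the (finite) set of `ℚ_p`-algebra embeddings `F ↪ E`, restricted here to `O`,
`ν : O → ℝ` is the absolute value on `O` (the common restriction of the norm of `E` along any
embedding), `ϖ` is a fixed uniformizer with `ν ϖ = q⁻¹` where `q = p^f` is the cardinality
of the residue field, and `u * ϖ ^ e = p` records the ramification index `e`.
-/

open scoped Classical

noncomputable section

namespace CrPaper

structure Setting (S O E : Type*) [Fintype S] [CommRing O] [NormedField E] where
  q : ℝ
  p : ℕ
  fdeg : ℕ
  hp : p.Prime
  hfdeg : 0 < fdeg
  hq : q = (p : ℝ) ^ fdeg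
  emb : S → O →+* E
  emb_inj : ∀ s, Function.Injective (emb s)
  emb_distinct : Function.Injective emb
  ν : O → ℝ
  norm_emb : ∀ (s) (z : O), ‖emb s z‖ = ν z
  norm_le_one : ∀ (s) (z : O), ‖emb s z‖ ≤ 1
  norm_add_max : ∀ x y : E, ‖x + y‖ ≤ max ‖x‖ ‖y‖
  ϖ : O
  ν_ϖ : ν ϖ = q⁻¹
  mem_ball_iff : ∀ (y : O) (n : ℕ), (∃ z, y = ϖ ^ n * z) ↔ ν y ≤ q⁻¹ ^ n
  ram : ∃ (e : ℕ) (u : O), 0 < e ∧ IsUnit u ∧ u * ϖ ^ e = (p : O)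

variable {S O E : Type*} [Fintype S] [DecidableEq S] [CommRing O] [IsDomain O]
  [NormedField E] [CompleteSpace E] [CharZero E]

/-- The total weight `|i| = ∑ i_σ` of a multi-index. -/
def wt (i : S → ℕ) : ℕ := ∑ s, i s

/-- `i! = ∏ i_σ!` for a multi-index. -/
def mfact (i : S → ℕ) : ℕ := ∏ s, (i s).factorial

/-- The (finite) set `I_{≤N}` of multi-indices of total weight `≤ N`. -/
def Idx (S : Type*) [Fintype S] [DecidableEq S] (N : ℕ) : Finset (S → ℕ) :=
  (Fintype.piFinset fun _ : S => Finset.range (N + 1)).filter fun i => wt i ≤ N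

/-- `z^i = ∏_σ σ(z)^{i_σ}`. -/
def mpow (St : Setting S O E) (z : O) (i : S → ℕ) : E := ∏ s, St.emb s z ^ i s

/-- The Taylor remainder `ε_{f,N}(x,y) = f(x+y) − ∑_{|i|≤N} D_i f(x) y^i / i!`. -/
def epsTay (St : Setting S O E) (N : ℕ) (f : O → E) (D : (S → ℕ) → O → E) (x y : O) : E :=
  f (x + y) - ∑ i ∈ Idx S N, D i x * mpow St y i / (mfact i : E)

/-- `f` is of class `C^r` with the family of bounded functions `D` witnessing the
definition: all `D_i` (`|i| ≤ ⌊r⌋`) are bounded and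
`C_{f,r}(h) = sup_{x ∈ O, y ∈ ϖ^h O} |ε_{f,⌊r⌋}(x,y)| q^{rh} → 0` as `h → ∞`. -/
def IsCrWith (St : Setting S O E) (r : ℝ) (f : O → E) (D : (S → ℕ) → O → E) : Prop :=
  (∀ i ∈ Idx S ⌊r⌋₊, ∃ C : ℝ, ∀ x : O, ‖D i x‖ ≤ C) ∧
  ∀ ε : ℝ, 0 < ε → ∃ M : ℕ, ∀ h : ℕ, M ≤ h → ∀ x z : O,
    ‖epsTay St ⌊r⌋₊ f D x (St.ϖ ^ h * z)‖ * St.q ^ (r * (h : ℝ)) ≤ ε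

/-- `f` is of class `C^r`. -/
def IsCr (St : Setting S O E) (r : ℝ) (f : O → E) : Prop :=
  ∃ D, IsCrWith St r f D

/-- The `C^r`-norm of `f` (relative to the — unique — family `D`):
`max( sup_{i,x} |D_i f(x)/i!| , sup_{x,y} |ε_{f,⌊r⌋}(x,y)|/|y|^r )`. -/
def CrNorm (St : Setting S O E) (r : ℝ) (f : O → E) (D : (S → ℕ) → O → E) : ℝ :=
  max (⨆ i : (Idx S ⌊r⌋₊), ⨆ x : O, ‖D i.1 x / (mfact i.1 : E)‖)
      (⨆ x : O, ⨆ y : O, ‖epsTay St ⌊r⌋₊ f D x y‖ / St.ν y ^ r)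

/-- A compatible system of representatives `A_h` of `O/ϖ^h O` with `A_0 = {0}` and
`A_h ⊆ A_{h+1}`. -/
structure RepSystem (St : Setting S O E) where
  A : ℕ → Finset O
  hA0 : A 0 = {0}
  hmono : ∀ h : ℕ, A h ⊆ A (h + 1)
  hrep : ∀ (h : ℕ) (z : O), ∃! a : O, a ∈ A h ∧ ∃ y : O, z = a + St.ϖ ^ h * y

/-- `A = ⋃_h A_h`. -/
def Aall (St : Setting S O E) (R : RepSystem St) : Set O := ⋃ h : ℕ, (R.A h : Set O)

/-- `l(a)`: the smallest `n` with `a ∈ A_n`. -/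
def lA (St : Setting S O E) (R : RepSystem St) (a : O) : ℕ := sInf {n : ℕ | a ∈ R.A n}

/-- The function `z ↦ 1_{a+ϖ^n O}(z) ((z−a)/ϖ^n)^i` : it takes the value `y^i` at
`z = a + ϖ^n y` and `0` outside the coset `a + ϖ^n O`. -/
def coeval (St : Setting S O E) (a : O) (n : ℕ) (i : S → ℕ) : O → E := fun z =>
  if hz : ∃ y : O, z = a + St.ϖ ^ n * y then mpow St hz.choose i else 0

/-- The function `e_{a,i,r}(z) = ρ(ϖ)^{[l(a)r]} 1_{a+ϖ^{l(a)}O}(z) ((z−a)/ϖ^{l(a)})^i`. -/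
def ebasis (St : Setting S O E) (R : RepSystem St) (ρ : O →+* E) (r : ℝ) (a : O)
    (i : S → ℕ) : O → E := fun z =>
  ρ St.ϖ ^ ⌊(lA St R a : ℝ) * r⌋₊ * coeval St a (lA St R a) i z


/-!
Cut the expansion `f = ∑ b_{a,i} e_{a,i,r}` at a level `n`, keeping the terms with `l(a) ≤ n`. Near
a point `a ∈ A_n` the discarded terms vanish, while on the whole coset `a + ϖ^n O` the kept ones are
polynomial of degree at most `⌊r⌋`; hence they are the Taylor polynomial of `f` at `a`, and on that
coset they differ from `f` by a Taylor remainder, of norm at most `‖f‖ q^{-rn}`. The terms with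
`l(a) = n` are the difference of two consecutive truncations, so up to the factor `q^r` they obey
the same bound. On the coset of `a` they reduce to the polynomial
`ρ(ϖ)^{⌊nr⌋} ∑_i b_{a,i} y^i`, and the monomials `y^i` are distinct multiplicative characters of
`O`, so they are linearly independent (Dedekind) and the coefficients are bounded by a constant
times the supremum of the polynomial.
-/

section LinearIndependence

/-- The spanning property of the evaluation vectors inverts the evaluation map with finitely many
sample points, whence the bound. -/
lemma exists_norm_coeff_le_of_linearIndependent {ι X 𝕜 : Type*} [Fintype ι] [NormedField 𝕜]
    {φ : ι → X → 𝕜} (hφ : LinearIndependent 𝕜 φ) :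
    ∃ K : ℝ, 0 ≤ K ∧ ∀ (c : ι → 𝕜) (B : ℝ), (∀ x, ‖∑ i, c i * φ i x‖ ≤ B) →
      ∀ i, ‖c i‖ ≤ K * B := by
  have hspan : Submodule.span 𝕜 (Set.range (flip φ)) = ⊤ :=
    span_flip_eq_top_iff_linearIndependent.2 hφ
  have hsingle (i : ι) : ∃ w : X →₀ 𝕜, w.sum (fun x t => t • flip φ x) = Pi.single i 1 :=
    Finsupp.mem_span_range_iff_exists_finsupp.1 (hspan ▸ Submodule.mem_top)
  choose w hw using hsingle
  have hcoeff (c : ι → 𝕜) (i : ι) : c i = (w i).sum fun x t => t * ∑ j, c j * φ j x := by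
    have heval (j : ι) : (w i).sum (fun x t => t * φ j x) = (Pi.single i 1 : ι → 𝕜) j := by
      rw [← hw i, Finsupp.sum_apply']
      rfl
    calc c i = ∑ j, c j * (Pi.single i 1 : ι → 𝕜) j := by simp [Pi.single_apply]
      _ = ∑ j, c j * (w i).sum (fun x t => t * φ j x) := by simp only [heval]
      _ = (w i).sum fun x t => t * ∑ j, c j * φ j x := by
        simp only [Finsupp.sum, Finset.mul_sum]
        rw [Finset.sum_comm]
        exact Finset.sum_congr rfl fun _ _ => Finset.sum_congr rfl fun _ _ => by ring
  let K (i : ι) : ℝ := (w i).sum fun _ t => ‖t‖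
  have hK (i : ι) : 0 ≤ K i := Finset.sum_nonneg fun _ _ => norm_nonneg _
  refine ⟨∑ i, K i, Finset.sum_nonneg fun i _ => hK i, fun c B hB i => ?_⟩
  obtain ⟨x, -⟩ := Function.ne_iff.1 (hφ.ne_zero i)
  have hB₀ : 0 ≤ B := (norm_nonneg _).trans (hB x)
  calc ‖c i‖ ≤ K i * B := by
        rw [hcoeff c i, Finsupp.sum_mul]
        refine norm_sum_le_of_le _ fun x _ => ?_
        rw [norm_mul]
        exact mul_le_mul_of_nonneg_left (hB x) (norm_nonneg _)
    _ ≤ (∑ i, K i) * B := by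
        gcongr
        exact Finset.single_le_sum (fun i _ => hK i) (Finset.mem_univ i)

/-- The equality is the comparison of the linear coefficients of `∏ (1 + a_s n)^{i_s}`, as
polynomials in `n`. -/
lemma sum_mul_eq_of_prod_one_add_mul_pow_eq {ι K : Type*} [Fintype ι] [CommRing K] [IsDomain K]
    [CharZero K] {a : ι → K} {i j : ι → ℕ}
    (h : ∀ n : ℕ, ∏ s, (1 + a s * n) ^ i s = ∏ s, (1 + a s * n) ^ j s) :
    ∑ s, (i s : K) * a s = ∑ s, (j s : K) * a s := by
  let P (k : ι → ℕ) : Polynomial K := ∏ s, (1 + Polynomial.C (a s) * Polynomial.X) ^ k s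
  have hP : P i = P j := by
    refine Polynomial.eq_of_infinite_eval_eq _ _ <|
      (Set.infinite_range_of_injective (Nat.cast_injective (R := K))).mono ?_
    rintro _ ⟨n, rfl⟩
    simpa [P, Polynomial.eval_prod] using h n
  have hderiv (k : ι → ℕ) : (P k).derivative.eval 0 = ∑ s, (k s : K) * a s := by
    simp [P, Polynomial.derivative_prod_finset, Polynomial.eval_finsetSum, Polynomial.eval_prod,
      Polynomial.derivative_pow]
  rw [← hderiv, hP, hderiv]

end LinearIndependence

section Monomials

omit [DecidableEq S] [IsDomain O] [CompleteSpace E] [CharZero E]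

lemma one_lt_q (St : Setting S O E) : 1 < St.q := by
  rw [St.hq]
  exact one_lt_pow₀ (by exact_mod_cast St.hp.one_lt) St.hfdeg.ne'

lemma q_pos (St : Setting S O E) : 0 < St.q := zero_lt_one.trans (one_lt_q St)

lemma inv_q_pos (St : Setting S O E) : 0 < St.q⁻¹ := inv_pos.2 (q_pos St)

lemma inv_q_lt_one (St : Setting S O E) : St.q⁻¹ < 1 := inv_lt_one_of_one_lt₀ (one_lt_q St)

lemma inv_q_pow_rpow_pos (St : Setting S O E) (h : ℕ) (r : ℝ) : 0 < (St.q⁻¹ ^ h) ^ r :=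
  Real.rpow_pos_of_pos (pow_pos (inv_q_pos St) h) r

lemma inv_q_pow_rpow_antitone (St : Setting S O E) {r : ℝ} (hr : 0 ≤ r) :
    Antitone fun h : ℕ => (St.q⁻¹ ^ h) ^ r := fun _ _ h =>
  Real.rpow_le_rpow (pow_pos (inv_q_pos St) _).le
    (pow_le_pow_of_le_one (inv_q_pos St).le (inv_q_lt_one St).le h) hr

lemma inv_q_pow_rpow_succ (St : Setting S O E) (h : ℕ) (r : ℝ) :
    St.q ^ r * (St.q⁻¹ ^ (h + 1)) ^ r = (St.q⁻¹ ^ h) ^ r := by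
  have hq := q_pos St
  rw [← Real.mul_rpow hq.le (by positivity), pow_succ', mul_inv_cancel_left₀ hq.ne']

lemma inv_q_pow_rpow_le_pow_floor (St : Setting S O E) (h : ℕ) {r : ℝ} (hr : 0 ≤ r) :
    (St.q⁻¹ ^ h) ^ r ≤ St.q⁻¹ ^ ⌊(h : ℝ) * r⌋₊ := by
  rw [← Real.rpow_natCast_mul (inv_q_pos St).le, ← Real.rpow_natCast]
  exact Real.rpow_le_rpow_of_exponent_ge (inv_q_pos St) (inv_q_lt_one St).le
    (Nat.floor_le (by positivity))

lemma isUltrametricDist (St : Setting S O E) : IsUltrametricDist E :=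
  IsUltrametricDist.isUltrametricDist_of_forall_norm_add_le_max_norm St.norm_add_max

lemma norm_sub_le_max (St : Setting S O E) (x y : E) : ‖x - y‖ ≤ max ‖x‖ ‖y‖ := by
  simpa [sub_eq_add_neg] using St.norm_add_max x (-y)

lemma norm_emb_uniformizer (St : Setting S O E) (s : S) : ‖St.emb s St.ϖ‖ = St.q⁻¹ := by
  rw [St.norm_emb, St.ν_ϖ]

lemma emb_uniformizer_ne_zero (St : Setting S O E) (s : S) : St.emb s St.ϖ ≠ 0 :=
  norm_pos_iff.1 (norm_emb_uniformizer St s ▸ inv_q_pos St)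

lemma mpow_mul (St : Setting S O E) (x y : O) (i : S → ℕ) :
    mpow St (x * y) i = mpow St x i * mpow St y i := by
  simp [mpow, mul_pow, Finset.prod_mul_distrib]

lemma norm_mpow_le_one (St : Setting S O E) (z : O) (i : S → ℕ) : ‖mpow St z i‖ ≤ 1 := by
  rw [mpow, norm_prod]
  refine Finset.prod_le_one (fun _ _ => norm_nonneg _) fun s _ => ?_
  rw [norm_pow]
  exact pow_le_one₀ (norm_nonneg _) (St.norm_le_one s z)

lemma norm_mpow_uniformizer_pow (St : Setting S O E) (h : ℕ) (i : S → ℕ) :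
    ‖mpow St (St.ϖ ^ h) i‖ = (St.q⁻¹ ^ h) ^ wt i := by
  simp [mpow, norm_emb_uniformizer, wt, Finset.prod_pow_eq_pow_sum]

lemma wt_mono : Monotone (wt : (S → ℕ) → ℕ) := fun _ _ h => Finset.sum_le_sum fun s _ => h s

end Monomials

section PolynomialFunctions

omit [IsDomain O] [CompleteSpace E] [CharZero E]

lemma mem_Idx {N : ℕ} {i : S → ℕ} : i ∈ Idx S N ↔ wt i ≤ N := by
  simp only [Idx, Finset.mem_filter, Fintype.mem_piFinset, Finset.mem_range, and_iff_right_iff_imp,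
    Nat.lt_succ_iff]
  exact fun h s => (Finset.single_le_sum (fun _ _ => Nat.zero_le _) (Finset.mem_univ s)).trans h

lemma mpow_add (St : Setting S O E) (x y : O) (i : S → ℕ) :
    mpow St (x + y) i =
      ∑ k ∈ Finset.Iic i, (∏ s, ((i s).choose (k s) : E)) * mpow St x (i - k) * mpow St y k := by
  have hIic : Finset.Iic i = Fintype.piFinset fun s => Finset.range (i s + 1) := by
    ext k
    simp [Pi.le_def]
  simp only [mpow, map_add, add_comm (St.emb _ x), add_pow, Finset.prod_univ_sum, hIic]
  refine Finset.sum_congr rfl fun k _ => ?_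
  rw [← Finset.prod_mul_distrib, ← Finset.prod_mul_distrib]
  exact Finset.prod_congr rfl fun s _ => by rw [Pi.sub_apply]; ring

/-- The space of polynomial functions `O → E` of total degree at most `N`. -/
def polyFun (St : Setting S O E) (N : ℕ) : Submodule E (O → E) :=
  Submodule.span E ((fun i z => mpow St z i) '' (Idx S N : Set (S → ℕ)))

lemma mem_polyFun {St : Setting S O E} {N : ℕ} {g : O → E} :
    g ∈ polyFun St N ↔ ∃ c : (S → ℕ) → E, ∀ z, g z = ∑ i ∈ Idx S N, c i * mpow St z i := by
  simp only [polyFun, Submodule.mem_span_image_finset_iff_exists_fun', funext_iff,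
    Finset.sum_apply, Pi.smul_apply, smul_eq_mul, eq_comm]

lemma mpow_mem_polyFun (St : Setting S O E) {N : ℕ} {i : S → ℕ} (hi : wt i ≤ N) :
    (fun z => mpow St z i) ∈ polyFun St N :=
  Submodule.subset_span ⟨i, mem_Idx.2 hi, rfl⟩

lemma mpow_affine_mem_polyFun (St : Setting S O E) (u t : O) {N : ℕ} {i : S → ℕ} (hi : wt i ≤ N) :
    (fun z => mpow St (u + t * z) i) ∈ polyFun St N := by
  have hexpand : (fun z => mpow St (u + t * z) i) = ∑ k ∈ Finset.Iic i,
      ((∏ s, ((i s).choose (k s) : E)) * mpow St u (i - k) * mpow St t k) •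
        fun z => mpow St z k := by
    ext z
    simp [mpow_add, mpow_mul, mul_assoc]
  rw [hexpand]
  exact Submodule.sum_mem _ fun k hk => Submodule.smul_mem _ _ <|
    mpow_mem_polyFun St ((wt_mono (Finset.mem_Iic.1 hk)).trans hi)

end PolynomialFunctions

section IndependenceOfMonomials

omit [IsDomain O] [CompleteSpace E]

omit [DecidableEq S] [CharZero E] in
lemma linearIndependent_emb (St : Setting S O E) :
    LinearIndependent E fun (s : S) (z : O) => St.emb s z :=
  (linearIndependent_monoidHom O E).comp (fun s => (St.emb s : O →* E))
    (RingHom.coe_monoidHom_injective.comp St.emb_distinct)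

omit [DecidableEq S] in
lemma mpow_injective (St : Setting S O E) :
    Function.Injective fun (i : S → ℕ) (z : O) => mpow St z i := by
  intro i j hij
  have hsum (z : O) : ∑ s, (i s : E) * St.emb s z = ∑ s, (j s : E) * St.emb s z :=
    sum_mul_eq_of_prod_one_add_mul_pow_eq fun n => by
      simpa [mpow] using congrFun hij (1 + z * n)
  have hcoeff := Fintype.linearIndependent_iff.1 (linearIndependent_emb St)
    (fun s => (i s : E) - j s) (by ext z; simp [sub_mul, hsum z])
  ext s
  exact_mod_cast sub_eq_zero.1 (hcoeff s)

omit [DecidableEq S] in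
lemma linearIndependent_mpow (St : Setting S O E) :
    LinearIndependent E fun (i : S → ℕ) (z : O) => mpow St z i := by
  let χ (i : S → ℕ) : O →* E := ∏ s, (St.emb s : O →* E) ^ i s
  have hχ (i : S → ℕ) : ⇑(χ i) = fun z => mpow St z i := by
    ext z
    simp [χ, mpow, MonoidHom.finsetProd_apply]
  have hinj : Function.Injective χ := fun i j hij =>
    mpow_injective St (by simpa only [hχ] using congrArg DFunLike.coe hij)
  simpa only [Function.comp_def, hχ] using (linearIndependent_monoidHom O E).comp χ hinj

lemma exists_norm_mpow_coeff_le (St : Setting S O E) (N : ℕ) :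
    ∃ K : ℝ, 0 ≤ K ∧ ∀ (c : (S → ℕ) → E) (B : ℝ),
      (∀ z, ‖∑ i ∈ Idx S N, c i * mpow St z i‖ ≤ B) → ∀ i ∈ Idx S N, ‖c i‖ ≤ K * B := by
  obtain ⟨K, hK₀, hK⟩ := exists_norm_coeff_le_of_linearIndependent
    ((linearIndependent_mpow St).comp ((↑) : Idx S N → S → ℕ) Subtype.val_injective)
  refine ⟨K, hK₀, fun c B hB i hi => hK (fun j => c j) B (fun z => ?_) ⟨i, hi⟩⟩
  simpa only [Function.comp_apply, Finset.sum_coe_sort _ fun j => c j * mpow St z j] using hB z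

/-- A monomial of degree `|i| ≤ r` cannot be `o(|z|^r)` at the origin. -/
lemma eq_zero_of_mem_polyFun_of_isLittleO {St : Setting S O E} {r : ℝ} (hr : 0 ≤ r) {g : O → E}
    (hg : g ∈ polyFun St ⌊r⌋₊)
    (hsmall : ∀ ε : ℝ, 0 < ε → ∃ h : ℕ, ∀ z, ‖g (St.ϖ ^ h * z)‖ ≤ ε * (St.q⁻¹ ^ h) ^ r) :
    g = 0 := by
  obtain ⟨c, hc⟩ := mem_polyFun.1 hg
  obtain ⟨K, hK₀, hK⟩ := exists_norm_mpow_coeff_le St ⌊r⌋₊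
  suffices hcoeff : ∀ i ∈ Idx S ⌊r⌋₊, c i = 0 by
    ext z
    rw [hc, Finset.sum_eq_zero fun i hi => by rw [hcoeff i hi, zero_mul], Pi.zero_apply]
  intro i hi
  have hle (ε : ℝ) (hε : 0 < ε) : ‖c i‖ ≤ K * ε := by
    obtain ⟨h, hh⟩ := hsmall ε hε
    have hpos : 0 < St.q⁻¹ ^ h := pow_pos (inv_q_pos St) h
    have hscaled : ‖c i‖ * (St.q⁻¹ ^ h) ^ wt i ≤ K * (ε * (St.q⁻¹ ^ h) ^ r) := by
      rw [← norm_mpow_uniformizer_pow, ← norm_mul]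
      refine hK (fun i => c i * mpow St (St.ϖ ^ h) i) _ (fun z => ?_) i hi
      simpa only [hc, mpow_mul, mul_assoc] using hh z
    have hdeg : (wt i : ℝ) ≤ r := (Nat.le_floor_iff hr).1 (mem_Idx.1 hi)
    refine le_of_mul_le_mul_right (hscaled.trans ?_) (pow_pos hpos (wt i))
    rw [mul_assoc]
    gcongr
    rw [← Real.rpow_natCast _ (wt i)]
    exact Real.rpow_le_rpow_of_exponent_ge hpos
      (pow_le_one₀ (inv_q_pos St).le (inv_q_lt_one St).le) hdeg
  have hlim : Filter.Tendsto (fun ε : ℝ => K * ε) (nhdsWithin 0 (Set.Ioi 0)) (nhds 0) :=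
    tendsto_nhdsWithin_of_tendsto_nhds (by simpa using (continuous_const_mul K).tendsto 0)
  exact norm_le_zero_iff.1 (ge_of_tendsto hlim (Filter.eventually_of_mem self_mem_nhdsWithin hle))

end IndependenceOfMonomials

section TaylorExpansion

omit [IsDomain O] [CompleteSpace E] [CharZero E]

variable {St : Setting S O E} {r : ℝ} {f : O → E} {D : (S → ℕ) → O → E}

/-- The Taylor polynomial `∑_{|i| ≤ N} D_i(x) y^i / i!`, as a function of `x` and `y`. -/
def taylor (St : Setting S O E) (N : ℕ) (D : (S → ℕ) → O → E) (x y : O) : E :=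
  ∑ i ∈ Idx S N, D i x * mpow St y i / (mfact i : E)

lemma taylor_eq_sub_epsTay (St : Setting S O E) (N : ℕ) (f : O → E) (D : (S → ℕ) → O → E)
    (x y : O) : taylor St N D x y = f (x + y) - epsTay St N f D x y :=
  (sub_sub_cancel _ _).symm

lemma taylor_mul_mem_polyFun (St : Setting S O E) (N : ℕ) (D : (S → ℕ) → O → E) (x t : O) :
    (fun y => taylor St N D x (t * y)) ∈ polyFun St N :=
  mem_polyFun.2 ⟨fun i => D i x * mpow St t i / (mfact i : E), fun y =>
    Finset.sum_congr rfl fun i _ => by rw [mpow_mul]; ring⟩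

lemma CrNorm_nonneg (St : Setting S O E) (r : ℝ) (f : O → E) (D : (S → ℕ) → O → E) :
    0 ≤ CrNorm St r f D :=
  le_max_of_le_left (Real.iSup_nonneg fun _ => Real.iSup_nonneg fun _ => norm_nonneg _)

lemma IsCrWith.norm_div_mfact_le (hD : IsCrWith St r f D) {i : S → ℕ} (hi : i ∈ Idx S ⌊r⌋₊)
    (x : O) : ‖D i x / (mfact i : E)‖ ≤ CrNorm St r f D := by
  obtain ⟨C, hC⟩ := hD.1 i hi
  have hbdd : BddAbove (Set.range fun x : O => ‖D i x / (mfact i : E)‖) := by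
    refine ⟨C / ‖(mfact i : E)‖, Set.forall_mem_range.2 fun x => ?_⟩
    rw [norm_div]
    gcongr
    exact hC x
  exact le_max_of_le_left <| (le_ciSup hbdd x).trans <| le_ciSup
    (f := fun i : Idx S ⌊r⌋₊ => ⨆ x : O, ‖D i.1 x / (mfact i.1 : E)‖)
    (Set.finite_range _).bddAbove ⟨i, hi⟩

lemma IsCrWith.norm_taylor_le (hD : IsCrWith St r f D) (x y : O) :
    ‖taylor St ⌊r⌋₊ D x y‖ ≤ CrNorm St r f D := by
  have := isUltrametricDist St
  refine IsUltrametricDist.norm_sum_le_of_forall_le_of_nonneg (CrNorm_nonneg St r f D)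
    fun i hi => ?_
  rw [mul_div_right_comm, norm_mul]
  exact (mul_le_of_le_one_right (norm_nonneg _) (norm_mpow_le_one St y i)).trans
    (hD.norm_div_mfact_le hi x)

lemma IsCrWith.exists_forall_ge_norm_epsTay_le (hD : IsCrWith St r f D) {ε : ℝ} (hε : 0 < ε) :
    ∃ M : ℕ, ∀ h, M ≤ h → ∀ x z,
      ‖epsTay St ⌊r⌋₊ f D x (St.ϖ ^ h * z)‖ ≤ ε * (St.q⁻¹ ^ h) ^ r := by
  obtain ⟨M, hM⟩ := hD.2 ε hε
  refine ⟨M, fun h hh x z => ?_⟩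
  have hq := q_pos St
  have hpow : (St.q⁻¹ ^ h) ^ r = (St.q ^ (r * (h : ℝ)))⁻¹ := by
    rw [inv_pow, Real.inv_rpow (by positivity), mul_comm, Real.rpow_natCast_mul hq.le]
  rw [hpow, ← div_eq_mul_inv, le_div_iff₀ (by positivity)]
  exact hM h hh x z

lemma IsCrWith.epsTay_eq_zero (hr : 0 ≤ r) (hD : IsCrWith St r f D) (x : O) {y : O}
    (hy : ∀ h : ℕ, ∃ z, y = St.ϖ ^ h * z) : epsTay St ⌊r⌋₊ f D x y = 0 := by
  refine norm_le_zero_iff.1 (le_of_forall_pos_le_add fun ε hε => ?_)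
  obtain ⟨M, hM⟩ := hD.exists_forall_ge_norm_epsTay_le hε
  obtain ⟨z, rfl⟩ := hy M
  have hpow : (St.q⁻¹ ^ M) ^ r ≤ 1 := by simpa using inv_q_pow_rpow_antitone St hr M.zero_le
  rw [zero_add]
  exact (hM M le_rfl x z).trans (mul_le_of_le_one_right hε.le hpow)

lemma IsCrWith.norm_apply_le (hr : 0 ≤ r) (hD : IsCrWith St r f D) (x : O) :
    ‖f x‖ ≤ CrNorm St r f D := by
  have hf : taylor St ⌊r⌋₊ D x 0 = f x := by
    rw [taylor_eq_sub_epsTay St _ f, hD.epsTay_eq_zero hr x fun _ => ⟨0, by simp⟩, add_zero,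
      sub_zero]
  exact hf ▸ hD.norm_taylor_le x 0

lemma IsCrWith.norm_epsTay_le (hr : 0 ≤ r) (hD : IsCrWith St r f D) (x y : O) :
    ‖epsTay St ⌊r⌋₊ f D x y‖ ≤ CrNorm St r f D :=
  (norm_sub_le_max St _ _).trans (max_le (hD.norm_apply_le hr _) (hD.norm_taylor_le x y))

lemma IsCrWith.exists_forall_norm_epsTay_le (hr : 0 ≤ r) (hD : IsCrWith St r f D) :
    ∃ B : ℝ, 0 ≤ B ∧ ∀ h x z,
      ‖epsTay St ⌊r⌋₊ f D x (St.ϖ ^ h * z)‖ ≤ B * (St.q⁻¹ ^ h) ^ r := by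
  obtain ⟨M, hM⟩ := hD.exists_forall_ge_norm_epsTay_le one_pos
  have hpos := inv_q_pow_rpow_pos St
  refine ⟨max 1 (CrNorm St r f D / (St.q⁻¹ ^ M) ^ r), by positivity, fun h x z => ?_⟩
  rcases le_total M h with hMh | hhM
  · refine (hM h hMh x z).trans ?_
    gcongr
    · exact (hpos h r).le
    · exact le_max_left _ _
  · calc ‖epsTay St ⌊r⌋₊ f D x (St.ϖ ^ h * z)‖ ≤ CrNorm St r f D := hD.norm_epsTay_le hr _ _
      _ = CrNorm St r f D / (St.q⁻¹ ^ M) ^ r * (St.q⁻¹ ^ M) ^ r :=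
        (div_mul_cancel₀ _ (hpos M r).ne').symm
      _ ≤ max 1 (CrNorm St r f D / (St.q⁻¹ ^ M) ^ r) * (St.q⁻¹ ^ h) ^ r :=
        mul_le_mul (le_max_right _ _) (inv_q_pow_rpow_antitone St hr hhM) (hpos M r).le
          (by positivity)

lemma IsCrWith.epsTay_eq_zero_of_ν_le_zero (hr : 0 ≤ r) (hD : IsCrWith St r f D) (x : O) {y : O}
    (hy : St.ν y ≤ 0) : epsTay St ⌊r⌋₊ f D x y = 0 :=
  hD.epsTay_eq_zero hr x fun h =>
    (St.mem_ball_iff y h).2 (hy.trans (pow_pos (inv_q_pos St) h).le)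

lemma IsCrWith.exists_norm_epsTay_div_le (hr : 0 ≤ r) (hD : IsCrWith St r f D) :
    ∃ B : ℝ, ∀ x y, ‖epsTay St ⌊r⌋₊ f D x y‖ / St.ν y ^ r ≤ B := by
  obtain ⟨B, hB₀, hB⟩ := hD.exists_forall_norm_epsTay_le hr
  have hq := q_pos St
  refine ⟨B * St.q ^ r, fun x y => ?_⟩
  rcases le_or_gt (St.ν y) 0 with hy | hy
  · rw [hD.epsTay_eq_zero_of_ν_le_zero hr x hy, norm_zero, zero_div]
    positivity
  · have hy₁ : St.ν y ≤ 1 := by simpa using (St.mem_ball_iff y 0).1 ⟨y, by simp⟩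
    obtain ⟨h, hlt, hle⟩ := exists_nat_pow_near_of_lt_one hy hy₁ (inv_q_pos St) (inv_q_lt_one St)
    obtain ⟨z, rfl⟩ := (St.mem_ball_iff y h).2 hle
    rw [div_le_iff₀ (Real.rpow_pos_of_pos hy r)]
    calc _ ≤ B * (St.q⁻¹ ^ h) ^ r := hB h x z
      _ = B * St.q ^ r * (St.q⁻¹ ^ (h + 1)) ^ r := by rw [mul_assoc, inv_q_pow_rpow_succ]
      _ ≤ B * St.q ^ r * St.ν (St.ϖ ^ h * z) ^ r := by gcongr

lemma IsCrWith.norm_epsTay_div_le (hr : 0 ≤ r) (hD : IsCrWith St r f D) (x y : O) :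
    ‖epsTay St ⌊r⌋₊ f D x y‖ / St.ν y ^ r ≤ CrNorm St r f D := by
  obtain ⟨B, hB⟩ := hD.exists_norm_epsTay_div_le hr
  refine le_max_of_le_right <| le_ciSup_of_le ?_ x <| le_ciSup_of_le ?_ y le_rfl
  · exact ⟨B, Set.forall_mem_range.2 fun x => ciSup_le (hB x)⟩
  · exact ⟨B, Set.forall_mem_range.2 (hB x)⟩

lemma IsCrWith.norm_epsTay_uniformizer_pow_mul_le (hr : 0 ≤ r) (hD : IsCrWith St r f D)
    (h : ℕ) (x z : O) :
    ‖epsTay St ⌊r⌋₊ f D x (St.ϖ ^ h * z)‖ ≤ CrNorm St r f D * (St.q⁻¹ ^ h) ^ r := by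
  have hnorm := CrNorm_nonneg St r f D
  rcases le_or_gt (St.ν (St.ϖ ^ h * z)) 0 with hy | hy
  · rw [hD.epsTay_eq_zero_of_ν_le_zero hr x hy, norm_zero]
    exact mul_nonneg hnorm (inv_q_pow_rpow_pos St h r).le
  · refine ((div_le_iff₀ (Real.rpow_pos_of_pos hy r)).1 (hD.norm_epsTay_div_le hr x _)).trans ?_
    gcongr
    exact (St.mem_ball_iff _ h).1 ⟨z, rfl⟩

end TaylorExpansion

section TruncatedExpansion

omit [IsDomain O] [CompleteSpace E]

variable {St : Setting S O E} {R : RepSystem St} {ρ : O →+* E} {r : ℝ}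
  {T : Finset (O × (S → ℕ))} {b : O × (S → ℕ) → E} {f : O → E} {D : (S → ℕ) → O → E}

lemma IsCrWith.eq_taylor_of_mem_polyFun (hr : 0 ≤ r) (hD : IsCrWith St r f D) {a : O} {n k : ℕ}
    {g : O → E} (hg : g ∈ polyFun St ⌊r⌋₊)
    (hfg : ∀ z, f (a + St.ϖ ^ n * (St.ϖ ^ k * z)) = g (St.ϖ ^ k * z)) (y : O) :
    g y = taylor St ⌊r⌋₊ D a (St.ϖ ^ n * y) := by
  have hmem := Submodule.sub_mem _ hg (taylor_mul_mem_polyFun St ⌊r⌋₊ D a (St.ϖ ^ n))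
  refine sub_eq_zero.1 (congrFun (eq_zero_of_mem_polyFun_of_isLittleO hr hmem fun ε hε => ?_) y)
  obtain ⟨M, hM⟩ := hD.exists_forall_ge_norm_epsTay_le hε
  refine ⟨k + M, fun z => ?_⟩
  have hsplit : St.ϖ ^ (k + M) * z = St.ϖ ^ k * (St.ϖ ^ M * z) := by ring
  have hjoin : St.ϖ ^ n * (St.ϖ ^ k * (St.ϖ ^ M * z)) = St.ϖ ^ (n + (k + M)) * z := by ring
  rw [Pi.sub_apply, taylor_eq_sub_epsTay St _ f, hsplit, hfg, sub_sub_cancel, hjoin]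
  exact (hM _ (by omega) a z).trans <| mul_le_mul_of_nonneg_left
    (inv_q_pow_rpow_antitone St hr (Nat.le_add_left _ _)) hε.le

omit [DecidableEq S] [CharZero E] in
lemma mem_A_of_lA_le {a : O} (ha : a ∈ Aall St R) {n : ℕ} (hn : lA St R a ≤ n) : a ∈ R.A n := by
  obtain ⟨m, hm⟩ := Set.mem_iUnion.1 ha
  have hmin : a ∈ R.A (lA St R a) := Nat.sInf_mem (s := {n : ℕ | a ∈ R.A n}) ⟨m, hm⟩
  exact monotone_nat_of_le_succ R.hmono hn hmin

omit [DecidableEq S] [CharZero E] in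
lemma coeval_add_mul (St : Setting S O E) (a : O) (n : ℕ) (i : S → ℕ) (y : O) :
    coeval St a n i (a + St.ϖ ^ n * y) = mpow St y i := by
  have hz : ∃ y', a + St.ϖ ^ n * y = a + St.ϖ ^ n * y' := ⟨y, rfl⟩
  rw [coeval, dif_pos hz]
  refine Finset.prod_congr rfl fun s _ => ?_
  have hemb := congrArg (St.emb s) (add_left_cancel hz.choose_spec)
  simp only [map_mul, map_pow] at hemb
  rw [mul_left_cancel₀ (pow_ne_zero n (emb_uniformizer_ne_zero St s)) hemb]

omit [DecidableEq S] [CharZero E] in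
lemma coeval_eq_zero {a z : O} {n : ℕ} (hz : ∀ y, z ≠ a + St.ϖ ^ n * y) (i : S → ℕ) :
    coeval St a n i z = 0 :=
  dif_neg (not_exists.2 hz)

omit [DecidableEq S] [CharZero E] in
lemma coeval_eq_zero_of_mem_of_ne {a c : O} {n : ℕ} (ha : a ∈ R.A n) (hc : c ∈ R.A n)
    (hne : a ≠ c) (i : S → ℕ) (y : O) : coeval St c n i (a + St.ϖ ^ n * y) = 0 :=
  coeval_eq_zero (fun w hw => hne <| (R.hrep n a).unique ⟨ha, 0, by simp⟩
    ⟨hc, w - y, by linear_combination hw⟩) i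

omit [CharZero E] in
lemma coeval_add_mul_mem_polyFun (St : Setting S O E) {m n N : ℕ} (hmn : m ≤ n) (a c : O)
    {i : S → ℕ} (hi : i ∈ Idx S N) :
    (fun y => coeval St c m i (a + St.ϖ ^ n * y)) ∈ polyFun St N := by
  obtain ⟨k, rfl⟩ := Nat.exists_eq_add_of_le hmn
  by_cases hac : ∃ u, a = c + St.ϖ ^ m * u
  · obtain ⟨u, rfl⟩ := hac
    have hcoset (y : O) : c + St.ϖ ^ m * u + St.ϖ ^ (m + k) * y
        = c + St.ϖ ^ m * (u + St.ϖ ^ k * y) := by ring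
    simpa only [hcoset, coeval_add_mul] using
      mpow_affine_mem_polyFun St u (St.ϖ ^ k) (mem_Idx.1 hi)
  · have hzero (y : O) : coeval St c m i (a + St.ϖ ^ (m + k) * y) = 0 :=
      coeval_eq_zero (fun w hw => hac ⟨w - St.ϖ ^ k * y, by linear_combination hw⟩) i
    simp only [hzero]
    exact (polyFun St N).zero_mem

/-- The part of the expansion `∑_{x ∈ T} b_x e_x` that involves the `e_{a,i,r}` with `l(a) < n`. -/
def truncation (R : RepSystem St) (ρ : O →+* E) (r : ℝ) (T : Finset (O × (S → ℕ)))
    (b : O × (S → ℕ) → E) (n : ℕ) (z : O) : E :=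
  ∑ x ∈ T with lA St R x.1 < n, b x * ebasis St R ρ r x.1 x.2 z

omit [DecidableEq S] [CharZero E] in
lemma truncation_zero (z : O) : truncation R ρ r T b 0 z = 0 := by
  simp [truncation]

omit [DecidableEq S] [CharZero E] in
lemma truncation_succ (n : ℕ) (z : O) :
    truncation R ρ r T b (n + 1) z = truncation R ρ r T b n z +
      ∑ x ∈ T with lA St R x.1 = n, b x * ebasis St R ρ r x.1 x.2 z := by
  simp only [truncation, Nat.lt_succ_iff_lt_or_eq, Finset.filter_or]
  exact Finset.sum_union (Finset.disjoint_filter.2 fun _ _ h => h.ne)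

omit [CharZero E] in
lemma truncation_add_mul_mem_polyFun (hT : ∀ x ∈ T, x.2 ∈ Idx S ⌊r⌋₊) (n : ℕ) (a : O) :
    (fun y => truncation R ρ r T b (n + 1) (a + St.ϖ ^ n * y)) ∈ polyFun St ⌊r⌋₊ := by
  have hsum : (fun y => truncation R ρ r T b (n + 1) (a + St.ϖ ^ n * y)) =
      ∑ x ∈ T with lA St R x.1 < n + 1, (b x * ρ St.ϖ ^ ⌊(lA St R x.1 : ℝ) * r⌋₊) •
        fun y => coeval St x.1 (lA St R x.1) x.2 (a + St.ϖ ^ n * y) := by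
    ext y
    simp [truncation, ebasis, mul_assoc]
  rw [hsum]
  refine Submodule.sum_mem _ fun x hx => Submodule.smul_mem _ _ ?_
  obtain ⟨hxT, hlt⟩ := Finset.mem_filter.1 hx
  exact coeval_add_mul_mem_polyFun St (Nat.lt_succ_iff.1 hlt) a x.1 (hT x hxT)

omit [DecidableEq S] [CharZero E] in
/-- For `l(c) > n` the support of `e_{c,i,r}` avoids a neighbourhood of every `a ∈ A_n`. -/
lemma exists_sum_eq_truncation (hT : ∀ x ∈ T, x.1 ∈ Aall St R) {n : ℕ} {a : O}
    (ha : a ∈ R.A n) :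
    ∃ k : ℕ, ∀ z, ∑ x ∈ T, b x * ebasis St R ρ r x.1 x.2 (a + St.ϖ ^ n * (St.ϖ ^ k * z)) =
      truncation R ρ r T b (n + 1) (a + St.ϖ ^ n * (St.ϖ ^ k * z)) := by
  refine ⟨T.sup fun x => lA St R x.1, fun z => (Finset.sum_filter_of_ne fun x hx => ?_).symm⟩
  contrapose!
  intro hlt
  obtain ⟨k, hk⟩ := Nat.exists_eq_add_of_le
    ((Finset.le_sup (f := fun x => lA St R x.1) hx).trans (Nat.le_add_left _ n))
  have hcoset : St.ϖ ^ n * (St.ϖ ^ (T.sup fun x => lA St R x.1) * z) =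
      St.ϖ ^ lA St R x.1 * (St.ϖ ^ k * z) := by
    rw [← mul_assoc, ← mul_assoc, ← pow_add, ← pow_add, hk]
  have hla : lA St R a ≤ n := Nat.sInf_le ha
  have hax : a ≠ x.1 := by
    rintro rfl
    omega
  have ha' : a ∈ R.A (lA St R x.1) := monotone_nat_of_le_succ R.hmono (by omega) ha
  rw [ebasis, hcoset, coeval_eq_zero_of_mem_of_ne ha' (mem_A_of_lA_le (hT x hx) le_rfl) hax,
    mul_zero, mul_zero]

lemma truncation_eq_taylor (hr : 0 ≤ r) (hT : ∀ x ∈ T, x.1 ∈ Aall St R ∧ x.2 ∈ Idx S ⌊r⌋₊)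
    (hf : ∀ z, f z = ∑ x ∈ T, b x * ebasis St R ρ r x.1 x.2 z) (hD : IsCrWith St r f D)
    {n : ℕ} {a : O} (ha : a ∈ R.A n) (y : O) :
    truncation R ρ r T b (n + 1) (a + St.ϖ ^ n * y) = taylor St ⌊r⌋₊ D a (St.ϖ ^ n * y) := by
  obtain ⟨k, hk⟩ := exists_sum_eq_truncation (fun x hx => (hT x hx).1) ha
  exact hD.eq_taylor_of_mem_polyFun hr
    (truncation_add_mul_mem_polyFun (fun x hx => (hT x hx).2) n a)
    (fun z => (hf _).trans (hk z)) y

lemma norm_sub_truncation_le (hr : 0 ≤ r) (hT : ∀ x ∈ T, x.1 ∈ Aall St R ∧ x.2 ∈ Idx S ⌊r⌋₊)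
    (hf : ∀ z, f z = ∑ x ∈ T, b x * ebasis St R ρ r x.1 x.2 z) (hD : IsCrWith St r f D)
    (n : ℕ) (z : O) :
    ‖f z - truncation R ρ r T b n z‖ ≤ CrNorm St r f D * (St.q ^ r * (St.q⁻¹ ^ n) ^ r) := by
  cases n with
  | zero =>
    rw [truncation_zero, sub_zero, pow_zero, Real.one_rpow, mul_one]
    exact (hD.norm_apply_le hr z).trans (le_mul_of_one_le_right (CrNorm_nonneg St r f D)
      (Real.one_le_rpow (one_lt_q St).le hr))
  | succ n =>
    obtain ⟨a, ⟨ha, y, rfl⟩, -⟩ := R.hrep n z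
    rw [truncation_eq_taylor hr hT hf hD ha, taylor_eq_sub_epsTay St _ f, sub_sub_cancel,
      inv_q_pow_rpow_succ]
    exact hD.norm_epsTay_uniformizer_pow_mul_le hr n a y

lemma norm_sum_lA_eq_le (hr : 0 ≤ r) (hT : ∀ x ∈ T, x.1 ∈ Aall St R ∧ x.2 ∈ Idx S ⌊r⌋₊)
    (hf : ∀ z, f z = ∑ x ∈ T, b x * ebasis St R ρ r x.1 x.2 z) (hD : IsCrWith St r f D)
    (n : ℕ) (z : O) :
    ‖∑ x ∈ T with lA St R x.1 = n, b x * ebasis St R ρ r x.1 x.2 z‖ ≤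
      CrNorm St r f D * (St.q ^ r * (St.q⁻¹ ^ n) ^ r) := by
  have hq := q_pos St
  have hnorm := CrNorm_nonneg St r f D
  have hlayer : ∑ x ∈ T with lA St R x.1 = n, b x * ebasis St R ρ r x.1 x.2 z =
      (f z - truncation R ρ r T b n z) - (f z - truncation R ρ r T b (n + 1) z) := by
    rw [truncation_succ]
    ring
  rw [hlayer]
  refine (norm_sub_le_max St _ _).trans
    (max_le (norm_sub_truncation_le hr hT hf hD n z)
      ((norm_sub_truncation_le hr hT hf hD (n + 1) z).trans ?_))
  gcongr CrNorm St r f D * (St.q ^ r * ?_)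
  exact inv_q_pow_rpow_antitone St hr n.le_succ

omit [CharZero E] in
lemma sum_lA_eq_add_mul (hT : ∀ x ∈ T, x.1 ∈ Aall St R ∧ x.2 ∈ Idx S ⌊r⌋₊) {a : O}
    (ha : a ∈ Aall St R) (y : O) :
    ∑ x ∈ T with lA St R x.1 = lA St R a,
        b x * ebasis St R ρ r x.1 x.2 (a + St.ϖ ^ lA St R a * y) =
      ∑ i ∈ Idx S ⌊r⌋₊, (if (a, i) ∈ T then b (a, i) * ρ St.ϖ ^ ⌊(lA St R a : ℝ) * r⌋₊ else 0) *
        mpow St y i := by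
  have hfilter : {x ∈ {x ∈ T | lA St R x.1 = lA St R a} | x.1 = a} =
      {x ∈ {a} ×ˢ Idx S ⌊r⌋₊ | x ∈ T} := by
    ext ⟨c, i⟩
    simp only [Finset.mem_filter, Finset.mem_product, Finset.mem_singleton]
    constructor
    · rintro ⟨⟨hx, -⟩, rfl⟩
      exact ⟨⟨rfl, (hT _ hx).2⟩, hx⟩
    · rintro ⟨⟨rfl, -⟩, hx⟩
      exact ⟨⟨hx, rfl⟩, rfl⟩
  have hne : ∀ x ∈ T.filter fun x => lA St R x.1 = lA St R a,
      b x * ebasis St R ρ r x.1 x.2 (a + St.ϖ ^ lA St R a * y) ≠ 0 → x.1 = a := by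
    intro x hx
    obtain ⟨hxT, hlx⟩ := Finset.mem_filter.1 hx
    contrapose!
    intro hxa
    rw [ebasis, hlx, coeval_eq_zero_of_mem_of_ne (mem_A_of_lA_le ha le_rfl)
      (mem_A_of_lA_le (hT x hxT).1 hlx.le) hxa.symm, mul_zero, mul_zero]
  rw [← Finset.sum_filter_of_ne hne, hfilter, Finset.sum_filter, Finset.sum_product,
    Finset.sum_singleton]
  refine Finset.sum_congr rfl fun i _ => ?_
  rw [ebasis, coeval_add_mul, ite_mul, zero_mul, mul_assoc]

theorem statement12_general (St : Setting S O E) (R : RepSystem St) (ρ : O →+* E)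
    (hρ : ∀ z : O, ‖ρ z‖ = St.ν z) (r : ℝ) (hr : 0 ≤ r) :
    ∃ C : ℝ, 0 ≤ C ∧
      ∀ (T : Finset (O × (S → ℕ))) (b : O × (S → ℕ) → E)
        (f : O → E) (D : (S → ℕ) → O → E),
        (∀ x ∈ T, x.1 ∈ Aall St R ∧ x.2 ∈ Idx S ⌊r⌋₊) →
        (∀ z : O, f z = ∑ x ∈ T, b x * ebasis St R ρ r x.1 x.2 z) →
        IsCrWith St r f D →
        ∀ x ∈ T, ‖b x‖ ≤ C * CrNorm St r f D := by
  obtain ⟨K, hK₀, hK⟩ := exists_norm_mpow_coeff_le St ⌊r⌋₊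
  have hq := q_pos St
  refine ⟨K * St.q ^ r, by positivity, ?_⟩
  rintro T b f D hT hf hD ⟨a, i⟩ hx
  obtain ⟨ha, hi⟩ := hT _ hx
  have hnorm := CrNorm_nonneg St r f D
  have hcoeff := hK _ _
    (fun y => sum_lA_eq_add_mul hT ha y ▸ norm_sum_lA_eq_le hr hT hf hD _ _) i hi
  rw [if_pos hx, norm_mul, norm_pow, hρ, St.ν_ϖ] at hcoeff
  refine le_of_mul_le_mul_right (hcoeff.trans ?_)
    (pow_pos (inv_q_pos St) ⌊(lA St R a : ℝ) * r⌋₊)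
  calc K * (CrNorm St r f D * (St.q ^ r * (St.q⁻¹ ^ lA St R a) ^ r))
      = K * St.q ^ r * CrNorm St r f D * (St.q⁻¹ ^ lA St R a) ^ r := by ring
    _ ≤ K * St.q ^ r * CrNorm St r f D * St.q⁻¹ ^ ⌊(lA St R a : ℝ) * r⌋₊ := by
        gcongr
        exact inv_q_pow_rpow_le_pow_floor St _ hr

end TruncatedExpansion

/-- there is `C ≥ 0` such that for every `f ∈ 𝓕^{[r]}(O,S)`, its coefficients
`b_{a,i,r}(f)` in the basis `(e_{a,i,r})` satisfy `sup_{a,i} |b_{a,i,r}(f)| ≤ C ‖f‖_{C^r}`. -/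
theorem statement12 (St : Setting S O E) (R : RepSystem St) (ρ : O →+* E)
    (hρ : ∀ z : O, ‖ρ z‖ = St.ν z) (r : ℝ) (hr : 0 ≤ r) :
    ∃ C : ℝ, 0 ≤ C ∧
      ∀ (T : Finset (O × (S → ℕ))) (b : O × (S → ℕ) → E)
        (f : O → E) (D : (S → ℕ) → O → E),
        (∀ x ∈ T, x.1 ∈ Aall St R ∧ x.2 ∈ Idx S ⌊r⌋₊) →
        (∀ z : O, f z = ∑ x ∈ T, b x * ebasis St R ρ r x.1 x.2 z) →
        IsCrWith St r f D →
        ∀ x ∈ T, ‖b x‖ ≤ C * CrNorm St r f D := by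
  exact statement12_general St R ρ hρ r hr

end CrPaper
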